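/- arXiv:1910.04809 — 2 statements merged into one kernel-verified Lean document; each statement's English description precedes it below -/
import Mathlib

section
/- Let V be a continuous divergence-free vector field on an open set S ⊆ ℝ^n whose flow φ_t is defined for all time on S. Then the time-t flow maps preserve Lebesgue measure: for every measurable A ⊆ S and t ∈ ℝ, the Lebesgue measure of φ_t(A) equals that of A. -/
open Set MeasureTheory

noncomputable def vdiv {n : ℕ} (V : EuclideanSpace ℝ (Fin n) → EuclideanSpace ℝ (Fin n))
    (x : EuclideanSpace ℝ (Fin n)) : ℝ :=
  ∑ i, fderiv ℝ V x (EuclideanSpace.single i 1) i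

open scoped Topology

/-- **Jacobi's formula**: the derivative of `det M` is `tr (adj M * M')`. -/
theorem hasDerivWithinAt_matrix_det {ι : Type*} [Fintype ι] [DecidableEq ι]
    {M : ℝ → Matrix ι ι ℝ} {M' : Matrix ι ι ℝ} {s : Set ℝ} {t : ℝ}
    (h : ∀ i j, HasDerivWithinAt (fun u => M u i j) (M' i j) s t) :
    HasDerivWithinAt (fun u => (M u).det) ((M t).adjugate * M').trace s t := by
  have key : ((M t).adjugate * M').trace = ∑ σ : Equiv.Perm ι, ((Equiv.Perm.sign σ : ℤ) : ℝ) *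
      ∑ i, (∏ j ∈ Finset.univ.erase i, M t (σ j) j) • M' (σ i) i := by
    have h1 : ∀ i, ((M t).adjugate * M') i i = ((M t).updateCol i (fun j => M' j i)).det := by
      intro i
      rw [← Matrix.cramer_apply, Matrix.cramer_eq_adjugate_mulVec]
      rfl
    simp only [Matrix.trace, Matrix.diag_apply, h1, Matrix.det_apply', Finset.mul_sum]
    rw [Finset.sum_comm]
    refine Finset.sum_congr rfl fun σ _ => Finset.sum_congr rfl fun i _ => ?_
    rw [← Finset.prod_erase_mul _ _ (Finset.mem_univ i)]
    congr 1
    rw [smul_eq_mul]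
    congr 1
    · refine Finset.prod_congr rfl fun j hj => ?_
      rw [Matrix.updateCol_ne (Finset.ne_of_mem_erase hj)]
    · simp
  rw [key]
  simp only [Matrix.det_apply']
  refine HasDerivWithinAt.fun_sum fun σ _ => ?_
  exact (HasDerivWithinAt.fun_finsetProd fun i _ => h (σ i) i).const_mul _

/-- **Liouville's formula**: if `M' = A M` then `(det M)' = tr A * det M`. -/
theorem hasDerivWithinAt_det_of_linear_ode {E : Type*} [NormedAddCommGroup E] [NormedSpace ℝ E]
    {ι : Type*} [Fintype ι] [DecidableEq ι] (b : Module.Basis ι ℝ E)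
    {M : ℝ → E →L[ℝ] E} {A : E →L[ℝ] E} {s : Set ℝ} {t : ℝ}
    (h : HasDerivWithinAt M (A ∘L M t) s t) :
    HasDerivWithinAt (fun u => (M u).det)
      ((∑ i, b.repr (A (b i)) i) * (M t).det) s t := by
  have : FiniteDimensional ℝ E := b.finiteDimensional_of_finite
  let N : ℝ → Matrix ι ι ℝ := fun u => LinearMap.toMatrix b b (M u : E →ₗ[ℝ] E)
  have hdet : ∀ u, (M u).det = (N u).det := fun u => (LinearMap.det_toMatrix b _).symm
  have hN : ∀ i j, HasDerivWithinAt (fun u => N u i j)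
      ((LinearMap.toMatrix b b (A : E →ₗ[ℝ] E) * N t) i j) s t := by
    intro i j
    have h1 : HasDerivWithinAt (fun u => M u (b j)) (A (M t (b j))) s t := by
      simpa using h.clm_apply (hasDerivWithinAt_const t s (b j))
    have h2 := (LinearMap.toContinuousLinearMap (b.coord i)).hasFDerivAt.comp_hasDerivWithinAt t h1
    rw [← LinearMap.toMatrix_comp]
    simpa [N, LinearMap.toMatrix_apply, Function.comp_def] using h2
  simp only [hdet]
  have h3 := hasDerivWithinAt_matrix_det hN
  rw [← mul_assoc, Matrix.trace_mul_cycle, Matrix.mul_adjugate] at h3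
  convert h3 using 1
  simp [Matrix.trace, LinearMap.toMatrix_apply, mul_comm, Finset.sum_mul]

/-- Over a short time interval, the linear equation `M' = A M` has a solution with `M 0 = 1`. -/
theorem exists_linear_ode_solution {E : Type*} [NormedAddCommGroup E] [NormedSpace ℝ E]
    [CompleteSpace E] {A : ℝ → E →L[ℝ] E} {T C : ℝ} (hT : 0 ≤ T) (hC : 0 ≤ C)
    (hA : ContinuousOn A (Icc 0 T)) (hAC : ∀ t ∈ Icc 0 T, ‖A t‖ ≤ C) (hCT : 2 * C * T ≤ 1) :
    ∃ M : ℝ → E →L[ℝ] E, M 0 = ContinuousLinearMap.id ℝ E ∧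
      ∀ t ∈ Icc 0 T, HasDerivWithinAt M (A t ∘L M t) (Icc 0 T) t := by
  have hp : IsPicardLindelof (fun t (m : E →L[ℝ] E) => A t ∘L m)
      (⟨0, left_mem_Icc.2 hT⟩ : Icc (0 : ℝ) T)
      (ContinuousLinearMap.id ℝ E) 1 0 (2 * C.toNNReal) C.toNNReal := by
    constructor
    · intro t ht
      refine LipschitzOnWith.of_dist_le_mul fun x _ y _ => ?_
      rw [dist_eq_norm, dist_eq_norm, ← ContinuousLinearMap.comp_sub, Real.coe_toNNReal _ hC]
      exact (ContinuousLinearMap.opNorm_comp_le _ _).trans (by gcongr; exact hAC t ht)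
    · intro x _
      exact hA.clm_comp continuousOn_const
    · intro t ht x hx
      have h1 : ‖x‖ ≤ 2 := by
        have h2 : ‖x - ContinuousLinearMap.id ℝ E‖ ≤ 1 := by simpa [dist_eq_norm] using hx
        have h3 := ContinuousLinearMap.norm_id_le (𝕜 := ℝ) (E := E)
        have h4 := norm_le_norm_sub_add x (ContinuousLinearMap.id ℝ E)
        linarith
      have := (ContinuousLinearMap.opNorm_comp_le (A t) x).trans
        (mul_le_mul (hAC t ht) h1 (norm_nonneg _) hC)
      simpa [Real.coe_toNNReal _ hC, mul_comm] using this
    · simpa [Real.coe_toNNReal _ hC, hT] using hCT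
  obtain ⟨M, h0, hM⟩ := hp.exists_eq_forall_mem_Icc_hasDerivWithinAt₀
  exact ⟨M, h0, hM⟩

/-- First-order Taylor expansion of a `C¹` map, uniformly along a compact set. -/
theorem exists_uniform_norm_sub_fderiv_le {E F : Type*} [NormedAddCommGroup E] [NormedSpace ℝ E]
    [NormedAddCommGroup F] [NormedSpace ℝ F]
    {S K : Set E} (hS : IsOpen S) {V : E → F} (hV : ContDiffOn ℝ 1 V S)
    (hK : IsCompact K) (hKS : K ⊆ S) {ε : ℝ} (hε : 0 < ε) :
    ∃ r > 0, ∀ z ∈ K, ∀ w, ‖w - z‖ < r →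
      ‖V w - V z - fderiv ℝ V z (w - z)‖ ≤ ε * ‖w - z‖ := by
  refine hK.induction_on (p := fun K => ∃ r > 0, ∀ z ∈ K, ∀ w, ‖w - z‖ < r →
      ‖V w - V z - fderiv ℝ V z (w - z)‖ ≤ ε * ‖w - z‖) ⟨1, one_pos, by simp⟩ ?_ ?_ ?_
  · rintro s t hst ⟨r, hr, h⟩
    exact ⟨r, hr, fun z hz => h z (hst hz)⟩
  · rintro s t ⟨r, hr, h⟩ ⟨r', hr', h'⟩
    refine ⟨min r r', lt_min hr hr', ?_⟩
    rintro z (hz | hz) w hw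
    · exact h z hz w (hw.trans_le (min_le_left _ _))
    · exact h' z hz w (hw.trans_le (min_le_right _ _))
  · intro z₀ hz₀
    have hc : ContDiffAt ℝ 1 V z₀ := hV.contDiffAt (hS.mem_nhds (hKS hz₀))
    have h1 := (hc.hasStrictFDerivAt one_ne_zero).isLittleO.def (half_pos hε)
    have h2 : ∀ᶠ z in 𝓝 z₀, ‖fderiv ℝ V z₀ - fderiv ℝ V z‖ ≤ ε / 2 := by
      have h3 : ContinuousAt (fderiv ℝ V) z₀ :=
        (hc.fderiv_right (m := 0) (by norm_num)).continuousAt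
      filter_upwards [Metric.continuousAt_iff'.1 h3 _ (half_pos hε)] with z hz
      rw [dist_comm, dist_eq_norm] at hz
      exact hz.le
    obtain ⟨ρ, hρ, h1⟩ := Metric.eventually_nhds_iff_ball.1 h1
    obtain ⟨ρ', hρ', h2⟩ := Metric.eventually_nhds_iff_ball.1 h2
    refine ⟨Metric.ball z₀ (min ρ ρ' / 2),
      mem_nhdsWithin_of_mem_nhds (Metric.ball_mem_nhds _ (by positivity)),
      min ρ ρ' / 2, by positivity, fun z hz w hw => ?_⟩
    have hm1 := min_le_left ρ ρ'
    have hm2 := min_le_right ρ ρ'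
    rw [Metric.mem_ball] at hz
    have hwz : dist w z₀ < ρ := by
      have := dist_triangle w z z₀
      rw [dist_eq_norm w z] at this
      linarith
    have hzρ : dist z z₀ < ρ := by linarith [dist_nonneg (x := z) (y := z₀)]
    have hzρ' : dist z z₀ < ρ' := by linarith [dist_nonneg (x := z) (y := z₀)]
    have h3 := h1 (w, z) (by simp [Prod.dist_eq, hwz, hzρ])
    have h4 := (fderiv ℝ V z₀ - fderiv ℝ V z).le_of_opNorm_le (h2 z hzρ') (w - z)
    have h5 : V w - V z - fderiv ℝ V z (w - z) = (V w - V z - fderiv ℝ V z₀ (w - z)) +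
        (fderiv ℝ V z₀ - fderiv ℝ V z) (w - z) := by simp
    rw [h5]
    refine (norm_add_le _ _).trans ?_
    simp only at h3
    linarith

/-- The flow of a `C¹` vector field is differentiable in the initial point, and its derivative
solves the first variation equation. -/
theorem hasFDerivAt_flow {E : Type*} [NormedAddCommGroup E] [NormedSpace ℝ E]
    {S : Set E} (hS : IsOpen S) {V : E → E} (hV : ContDiffOn ℝ 1 V S) {φ : ℝ → E → E}
    (hφ0 : ∀ x ∈ S, φ 0 x = x) (hφS : ∀ t : ℝ, ∀ x ∈ S, φ t x ∈ S)
    (hφflow : ∀ x ∈ S, ∀ t : ℝ, HasDerivAt (fun s => φ s x) (V (φ t x)) t)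
    {x : E} (hx : x ∈ S) {T : ℝ} (hT : 0 ≤ T) {M : ℝ → E →L[ℝ] E}
    (hM0 : M 0 = ContinuousLinearMap.id ℝ E)
    (hM : ∀ t ∈ Icc 0 T, HasDerivWithinAt M (fderiv ℝ V (φ t x) ∘L M t) (Icc 0 T) t) :
    HasFDerivAt (φ T) (M T) x := by
  have hcont : ∀ y ∈ S, Continuous (fun s => φ s y) := fun y hy =>
    continuous_iff_continuousAt.2 fun t => (hφflow y hy t).continuousAt
  have hKc : IsCompact ((fun s => φ s x) '' Icc 0 T) := isCompact_Icc.image (hcont x hx)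
  have hKS : (fun s => φ s x) '' Icc 0 T ⊆ S := by
    rintro _ ⟨s, _, rfl⟩
    exact hφS s x hx
  obtain ⟨C, hC, hAC⟩ : ∃ C > 0, ∀ t ∈ Icc 0 T, ‖fderiv ℝ V (φ t x)‖ ≤ C := by
    obtain ⟨C, hC⟩ := hKc.exists_bound_of_continuousOn
      ((hV.continuousOn_fderiv_of_isOpen hS le_rfl).mono hKS)
    exact ⟨max C 1, by positivity, fun t ht => (hC _ ⟨t, ht, rfl⟩).trans (le_max_left _ _)⟩
  rw [hasFDerivAt_iff_isLittleO, Asymptotics.isLittleO_iff]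
  intro c hc
  set D := Real.exp ((C + 2) * T) with hD
  set Q := D * (Real.exp (C * T) - 1) / C with hQ
  have hQ0 : 0 ≤ Q := by
    have : 1 ≤ Real.exp (C * T) := Real.one_le_exp (by positivity)
    have : 0 ≤ Real.exp (C * T) - 1 := by linarith
    positivity
  set ε := min 1 (c / (Q + 1)) with hε
  have hε0 : 0 < ε := by positivity
  have hεQ : ε * Q ≤ c := by
    have h1 : ε ≤ c / (Q + 1) := min_le_right _ _
    rw [le_div_iff₀ (by positivity)] at h1
    nlinarith
  obtain ⟨r, hr, hTaylor⟩ := exists_uniform_norm_sub_fderiv_le hS hV hKc hKS hε0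
  have hnear : ∀ᶠ y in 𝓝 x, ‖y - x‖ < r / D := by
    filter_upwards [Metric.ball_mem_nhds x (div_pos hr (Real.exp_pos _))] with y hy
    rwa [← dist_eq_norm]
  filter_upwards [hnear, hS.mem_nhds hx] with y hy hyS
  rcases eq_or_ne y x with rfl | hne
  · simp
  have hpos : 0 < ‖y - x‖ := norm_pos_iff.2 (sub_ne_zero.2 hne)
  have hder : ∀ t, HasDerivAt (fun s => φ s y - φ s x) (V (φ t y) - V (φ t x)) t :=
    fun t => (hφflow y hyS t).sub (hφflow x hx t)
  have hBD : ∀ t ∈ Icc 0 T, ‖y - x‖ * Real.exp ((C + 2) * t) ≤ ‖y - x‖ * D := by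
    intro t ht
    have := ht.2
    rw [hD]
    gcongr
  have hrD : ‖y - x‖ * D < r := (lt_div_iff₀ (Real.exp_pos _)).1 hy
  have hconf : ∀ t ∈ Icc 0 T, ‖φ t y - φ t x‖ ≤ ‖y - x‖ * Real.exp ((C + 2) * t) := by
    refine image_norm_le_of_norm_deriv_right_lt_deriv_boundary
      (f' := fun t => V (φ t y) - V (φ t x))
      (B' := fun t => ‖y - x‖ * (Real.exp ((C + 2) * t) * (C + 2)))
      (fun t _ => (hder t).continuousAt.continuousWithinAt)
      (fun t _ => (hder t).hasDerivWithinAt) (by simp [hφ0 y hyS, hφ0 x hx]) (fun t => ?_) ?_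
    · simpa using (((hasDerivAt_id t).const_mul (C + 2)).exp.const_mul ‖y - x‖)
    · intro t ht heq
      have htI := Ico_subset_Icc_self ht
      have h1 := hTaylor _ ⟨t, htI, rfl⟩ (φ t y) (by
        simp only; rw [heq]; exact (hBD t htI).trans_lt hrD)
      have h2 := (fderiv ℝ V (φ t x)).le_of_opNorm_le (hAC t htI) (φ t y - φ t x)
      have h3 := norm_le_norm_sub_add (V (φ t y) - V (φ t x))
        (fderiv ℝ V (φ t x) (φ t y - φ t x))
      have h4 : ε ≤ 1 := min_le_left _ _
      have h5 : 0 < ‖y - x‖ * Real.exp ((C + 2) * t) := by positivity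
      simp only [heq] at h1 h2
      nlinarith
  have hg : ∀ t ∈ Icc 0 T,
      HasDerivWithinAt (fun s => φ s y - φ s x - M s (y - x))
        (V (φ t y) - V (φ t x) - fderiv ℝ V (φ t x) (M t (y - x))) (Icc 0 T) t := by
    intro t ht
    refine (hder t).hasDerivWithinAt.sub ?_
    simpa using (hM t ht).clm_apply (hasDerivWithinAt_const t _ (y - x))
  have hgron := norm_le_gronwallBound_of_norm_deriv_right_le
    (f := fun s => φ s y - φ s x - M s (y - x)) (δ := 0) (K := C)
    (ε := ε * (‖y - x‖ * D)) (a := 0) (b := T)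
    (fun t ht => (hg t ht).continuousWithinAt)
    (fun t ht => (hg t (Ico_subset_Icc_self ht)).mono_of_mem_nhdsWithin
      (Icc_mem_nhdsGE_of_mem ht))
    (by simp [hφ0 y hyS, hφ0 x hx, hM0]) (fun t ht => by
      have htI := Ico_subset_Icc_self ht
      have hle := (hconf t htI).trans (hBD t htI)
      have h1 := hTaylor _ ⟨t, htI, rfl⟩ (φ t y) (hle.trans_lt hrD)
      have h2 := (fderiv ℝ V (φ t x)).le_of_opNorm_le (hAC t htI)
        (φ t y - φ t x - M t (y - x))
      have h3 : V (φ t y) - V (φ t x) - fderiv ℝ V (φ t x) (M t (y - x)) =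
          (V (φ t y) - V (φ t x) - fderiv ℝ V (φ t x) (φ t y - φ t x)) +
          fderiv ℝ V (φ t x) (φ t y - φ t x - M t (y - x)) := by
        simp only [map_sub]; abel
      rw [h3]
      refine (norm_add_le _ _).trans ?_
      have h4 : ε * ‖φ t y - φ t x‖ ≤ ε * (‖y - x‖ * D) := by gcongr
      simp only at h1
      linarith) T (right_mem_Icc.2 hT)
  refine hgron.trans ?_
  rw [gronwallBound_of_K_ne_0 hC.ne']
  have : 0 * Real.exp (C * (T - 0)) + ε * (‖y - x‖ * D) / C * (Real.exp (C * (T - 0)) - 1) =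
      ε * Q * ‖y - x‖ := by
    rw [hQ]; simp; ring
  simp only [this]
  gcongr

/-- Two global integral curves of a `C¹` vector field which meet at some time coincide; it is
enough that one of them stays in the domain. -/
theorem eq_of_hasDerivAt_of_contDiffOn {E : Type*} [NormedAddCommGroup E] [NormedSpace ℝ E]
    {S : Set E} (hS : IsOpen S) {V : E → E} (hV : ContDiffOn ℝ 1 V S) {f g : ℝ → E}
    (hf : ∀ t, HasDerivAt f (V (f t)) t) (hfS : ∀ t, f t ∈ S)
    (hg : ∀ t, HasDerivAt g (V (g t)) t) {t₀ : ℝ} (h : f t₀ = g t₀) :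
    f = g := by
  have hfc : Continuous f := continuous_iff_continuousAt.2 fun t => (hf t).continuousAt
  have hgc : Continuous g := continuous_iff_continuousAt.2 fun t => (hg t).continuousAt
  have hclopen : IsClopen {t | f t = g t} := by
    refine ⟨isClosed_eq hfc hgc, isOpen_iff_mem_nhds.2 fun t ht => ?_⟩
    obtain ⟨K, s, hs, hK⟩ :=
      (hV.contDiffAt (hS.mem_nhds (hfS t))).exists_lipschitzOnWith
    refine ODE_solution_unique_of_eventually (v := fun _ => V) (s := fun _ => s) (K := K)
      (.of_forall fun _ => hK) ?_ ?_ ht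
    · filter_upwards [hfc.continuousAt.preimage_mem_nhds hs] with u hu using ⟨hf u, hu⟩
    · have hs' : s ∈ 𝓝 (g t) := by rwa [← show f t = g t from ht]
      filter_upwards [hgc.continuousAt.preimage_mem_nhds hs'] with u hu using ⟨hg u, hu⟩
  funext t
  exact eq_univ_iff_forall.1 (hclopen.eq_univ ⟨t₀, h⟩) t

/-- The group law of a global flow. -/
theorem flow_add {E : Type*} [NormedAddCommGroup E] [NormedSpace ℝ E]
    {S : Set E} (hS : IsOpen S) {V : E → E} (hV : ContDiffOn ℝ 1 V S) {φ : ℝ → E → E}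
    (hφ0 : ∀ x ∈ S, φ 0 x = x) (hφS : ∀ t : ℝ, ∀ x ∈ S, φ t x ∈ S)
    (hφflow : ∀ x ∈ S, ∀ t : ℝ, HasDerivAt (fun s => φ s x) (V (φ t x)) t)
    {x : E} (hx : x ∈ S) (s t : ℝ) : φ (s + t) x = φ s (φ t x) := by
  refine congrFun (eq_of_hasDerivAt_of_contDiffOn hS hV (f := fun s => φ (s + t) x)
    (g := fun s => φ s (φ t x)) (t₀ := 0) (fun s => ?_) (fun s => hφS _ x hx)
    (hφflow _ (hφS t x hx)) ?_) s
  · exact (hφflow x hx (s + t)).comp_add_const s t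
  · simp [hφ0 _ (hφS t x hx)]

/-- In forward time, the flow of a divergence-free field has derivative of determinant one. -/
theorem exists_hasFDerivAt_flow_det_eq_one {n : ℕ} {S : Set (EuclideanSpace ℝ (Fin n))}
    (hS : IsOpen S) {V : EuclideanSpace ℝ (Fin n) → EuclideanSpace ℝ (Fin n)}
    (hV : ContDiffOn ℝ 1 V S) (hdiv : ∀ x ∈ S, vdiv V x = 0)
    {φ : ℝ → EuclideanSpace ℝ (Fin n) → EuclideanSpace ℝ (Fin n)}
    (hφ0 : ∀ x ∈ S, φ 0 x = x) (hφS : ∀ t : ℝ, ∀ x ∈ S, φ t x ∈ S)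
    (hφflow : ∀ x ∈ S, ∀ t : ℝ, HasDerivAt (fun s => φ s x) (V (φ t x)) t)
    {x : EuclideanSpace ℝ (Fin n)} (hx : x ∈ S) {T : ℝ} (hT : 0 ≤ T) :
    ∃ D : EuclideanSpace ℝ (Fin n) →L[ℝ] EuclideanSpace ℝ (Fin n),
      HasFDerivAt (φ T) D x ∧ D.det = 1 := by
  have hcont : ∀ y ∈ S, Continuous (fun s => φ s y) := fun y hy =>
    continuous_iff_continuousAt.2 fun t => (hφflow y hy t).continuousAt
  have hDc : ∀ y ∈ S, Continuous (fun s => fderiv ℝ V (φ s y)) := fun y hy =>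
    (hV.continuousOn_fderiv_of_isOpen hS le_rfl).comp_continuous (hcont y hy)
      (fun s => hφS s y hy)
  obtain ⟨C, hC, hAC⟩ : ∃ C ≥ 0, ∀ t ∈ Icc 0 T, ‖fderiv ℝ V (φ t x)‖ ≤ C := by
    obtain ⟨C, hC⟩ := isCompact_Icc.exists_bound_of_continuousOn (s := Icc 0 T)
      (hDc x hx).continuousOn
    exact ⟨C, (norm_nonneg _).trans (hC 0 (left_mem_Icc.2 hT)), hC⟩
  have hshort : ∀ y ∈ S, ∀ τ ≥ 0, 2 * C * τ ≤ 1 →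
      (∀ t ∈ Icc 0 τ, ‖fderiv ℝ V (φ t y)‖ ≤ C) →
      ∃ D : EuclideanSpace ℝ (Fin n) →L[ℝ] EuclideanSpace ℝ (Fin n),
        HasFDerivAt (φ τ) D y ∧ D.det = 1 := by
    intro y hy τ hτ hCτ hb
    obtain ⟨M, hM0, hM⟩ := exists_linear_ode_solution hτ hC (hDc y hy).continuousOn hb hCτ
    refine ⟨M τ, hasFDerivAt_flow hS hV hφ0 hφS hφflow hy hτ hM0 hM, ?_⟩
    have hdet : ∀ t ∈ Icc 0 τ, HasDerivWithinAt (fun u => (M u).det) 0 (Icc 0 τ) t := by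
      intro t ht
      have h1 := hasDerivWithinAt_det_of_linear_ode
        (EuclideanSpace.basisFun (Fin n) ℝ).toBasis (hM t ht)
      have h2 := hdiv _ (hφS t y hy)
      rw [vdiv] at h2
      simpa [h2] using h1
    have := constant_of_has_deriv_right_zero (fun t ht => (hdet t ht).continuousWithinAt)
      (fun t ht => (hdet t (Ico_subset_Icc_self ht)).mono_of_mem_nhdsWithin
        (Icc_mem_nhdsGE_of_mem ht)) τ (right_mem_Icc.2 hτ)
    rw [this, hM0]
    exact LinearMap.det_id
  obtain ⟨N, hN⟩ := exists_nat_gt (2 * C * T)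
  have hN0 : (0 : ℝ) < N := lt_of_le_of_lt (by positivity) hN
  have hsteps : ∀ k : ℕ, k ≤ N →
      ∃ D : EuclideanSpace ℝ (Fin n) →L[ℝ] EuclideanSpace ℝ (Fin n),
        HasFDerivAt (φ (k * (T / N))) D x ∧ D.det = 1 := by
    intro k
    induction k with
    | zero =>
      intro _
      refine ⟨ContinuousLinearMap.id ℝ _, (hasFDerivAt_id x).congr_of_eventuallyEq ?_,
        LinearMap.det_id⟩
      filter_upwards [hS.mem_nhds hx] with y hy
      simpa using hφ0 y hy
    | succ k ih =>
      intro hk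
      obtain ⟨D, hD, hD1⟩ := ih (by omega)
      obtain ⟨D', hD', hD1'⟩ := hshort _ (hφS (k * (T / N)) x hx) (T / N) (by positivity)
        (by rw [← mul_div_assoc, div_le_one hN0]; exact hN.le) (by
          intro t ht
          rw [← flow_add hS hV hφ0 hφS hφflow hx]
          refine hAC _ ⟨add_nonneg ht.1 (by positivity), ?_⟩
          have h1 : ((k : ℝ) + 1) * (T / N) ≤ N * (T / N) := by
            gcongr
            exact_mod_cast hk
          rw [mul_div_cancel₀ _ hN0.ne'] at h1
          linarith [ht.2])
      refine ⟨D' ∘L D, (hD'.comp x hD).congr_of_eventuallyEq ?_, ?_⟩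
      · filter_upwards [hS.mem_nhds hx] with y hy
        rw [Function.comp_apply, ← flow_add hS hV hφ0 hφS hφflow hy]
        congr 1
        push_cast
        ring
      · exact (LinearMap.det_comp _ _).trans <|
          (congrArg₂ (· * ·) hD1' hD1).trans (one_mul 1)
  simpa [mul_div_cancel₀ _ hN0.ne'] using hsteps N le_rfl

/-- The flow of a divergence-free field preserves volume in forward time. -/
theorem volume_image_flow_of_nonneg {n : ℕ} {S : Set (EuclideanSpace ℝ (Fin n))}
    (hS : IsOpen S) {V : EuclideanSpace ℝ (Fin n) → EuclideanSpace ℝ (Fin n)}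
    (hV : ContDiffOn ℝ 1 V S) (hdiv : ∀ x ∈ S, vdiv V x = 0)
    {φ : ℝ → EuclideanSpace ℝ (Fin n) → EuclideanSpace ℝ (Fin n)}
    (hφ0 : ∀ x ∈ S, φ 0 x = x) (hφS : ∀ t : ℝ, ∀ x ∈ S, φ t x ∈ S)
    (hφflow : ∀ x ∈ S, ∀ t : ℝ, HasDerivAt (fun s => φ s x) (V (φ t x)) t)
    {t : ℝ} (ht : 0 ≤ t) {A : Set (EuclideanSpace ℝ (Fin n))} (hAS : A ⊆ S)
    (hA : MeasurableSet A) : volume (φ t '' A) = volume A := by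
  have hinj : InjOn (φ t) A := by
    intro x hx y hy hxy
    have h0 := congrFun (eq_of_hasDerivAt_of_contDiffOn hS hV (hφflow x (hAS hx))
      (fun s => hφS s x (hAS hx)) (hφflow y (hAS hy)) hxy) 0
    rwa [hφ0 x (hAS hx), hφ0 y (hAS hy)] at h0
  choose! D hD hD1 using fun x (hx : x ∈ S) =>
    exists_hasFDerivAt_flow_det_eq_one hS hV hdiv hφ0 hφS hφflow hx ht
  rw [← lintegral_abs_det_fderiv_eq_addHaar_image volume hA
    (fun x hx => (hD x (hAS hx)).hasFDerivWithinAt) hinj,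
    setLIntegral_congr_fun hA (g := fun _ => 1) fun x hx => by simp [hD1 x (hAS hx)],
    setLIntegral_one]

/-- the flow of a C¹ divergence-free vector field preserves Lebesgue measure. -/
theorem stmt_16 {n : ℕ} (S : Set (EuclideanSpace ℝ (Fin n))) (hS : IsOpen S)
    (V : EuclideanSpace ℝ (Fin n) → EuclideanSpace ℝ (Fin n))
    (hV : ContDiffOn ℝ 1 V S)
    (hdiv : ∀ x ∈ S, vdiv V x = 0)
    (φ : ℝ → EuclideanSpace ℝ (Fin n) → EuclideanSpace ℝ (Fin n))
    (hφ0 : ∀ x ∈ S, φ 0 x = x)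
    (hφS : ∀ t : ℝ, ∀ x ∈ S, φ t x ∈ S)
    (hφflow : ∀ x ∈ S, ∀ t : ℝ, HasDerivAt (fun s => φ s x) (V (φ t x)) t) :
    ∀ (t : ℝ) (A : Set (EuclideanSpace ℝ (Fin n))), A ⊆ S → MeasurableSet A →
      volume (φ t '' A) = volume A := by
  intro t A hAS hA
  rcases le_total 0 t with ht | ht
  · exact volume_image_flow_of_nonneg hS hV hdiv hφ0 hφS hφflow ht hAS hA
  · have h := volume_image_flow_of_nonneg (V := fun x => -V x) (φ := fun s => φ (-s)) hS hV.neg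
      (fun x hx => by
        have := hdiv x hx
        simp only [vdiv] at this ⊢
        rw [fderiv_fun_neg]
        simp [this])
      (fun x hx => by simpa using hφ0 x hx) (fun s => hφS (-s))
      (fun x hx s => by
        simpa [Function.comp_def] using
          (hφflow x hx (-s)).scomp s (hasDerivAt_neg s)) (neg_nonneg.2 ht) hAS hA
    simpa using h
end

section
/- Let u1, u2 ∈ C^2(Ω) both solve DΔu + ∇D·∇u − σu = 0 on a connected open set Ω, with u2 > 0, and suppose u = u1/u2 is constant on a nonempty open subset U ⊆ Ω. Then u is constant on Ω (unique continuation for the ratio of solutions). -/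
open scoped RealInnerProductSpace

noncomputable def lap {n : ℕ} (u : EuclideanSpace ℝ (Fin n) → ℝ)
    (x : EuclideanSpace ℝ (Fin n)) : ℝ :=
  vdiv (gradient u) x

open MeasureTheory Metric Filter Topology Set

/-- `𝔼 n` is the Euclidean space `ℝⁿ`. -/
local notation "𝔼" n:max => EuclideanSpace ℝ (Fin n)

section Calculus

variable {n : ℕ}

lemma HasFDerivAt.vdiv_eq {V : 𝔼 n → 𝔼 n} {V' : 𝔼 n →L[ℝ] 𝔼 n} {x : 𝔼 n}
    (hV : HasFDerivAt V V' x) : vdiv V x = ∑ i, V' (EuclideanSpace.single i 1) i := by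
  rw [vdiv, hV.fderiv]

lemma HasFDerivAt.vdiv_smul {f : 𝔼 n → ℝ} {f' : 𝔼 n →L[ℝ] ℝ} {V : 𝔼 n → 𝔼 n} {x : 𝔼 n}
    (hf : HasFDerivAt f f' x) (hV : DifferentiableAt ℝ V x) :
    vdiv (fun y => f y • V y) x = f x * vdiv V x + f' (V x) := by
  have hsum : V x = ∑ i, V x i • EuclideanSpace.single i (1 : ℝ) := by
    simpa using ((EuclideanSpace.basisFun (Fin n) ℝ).sum_repr (V x)).symm
  have hf' : f' (V x) = ∑ i, V x i * f' (EuclideanSpace.single i 1) := by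
    conv_lhs => rw [hsum]
    simp [map_sum]
  have h : HasFDerivAt (fun y => f y • V y) _ x := hf.smul hV.hasFDerivAt
  rw [h.vdiv_eq, vdiv, hf', Finset.mul_sum, ← Finset.sum_add_distrib]
  refine Finset.sum_congr rfl fun i _ => ?_
  simp [mul_comm]

lemma vdiv_add {V W : 𝔼 n → 𝔼 n} {x : 𝔼 n} (hV : DifferentiableAt ℝ V x)
    (hW : DifferentiableAt ℝ W x) : vdiv (fun y => V y + W y) x = vdiv V x + vdiv W x := by
  have h : HasFDerivAt (fun y => V y + W y) _ x := hV.hasFDerivAt.add hW.hasFDerivAt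
  rw [h.vdiv_eq, vdiv, vdiv, ← Finset.sum_add_distrib]
  simp

lemma Filter.EventuallyEq.vdiv_eq {V W : 𝔼 n → 𝔼 n} {x : 𝔼 n} (h : V =ᶠ[𝓝 x] W) :
    vdiv V x = vdiv W x := by
  rw [vdiv, vdiv, h.fderiv_eq]

lemma Filter.EventuallyEq.lap_eq {u v : 𝔼 n → ℝ} {x : 𝔼 n} (h : u =ᶠ[𝓝 x] v) :
    lap u x = lap v x :=
  h.gradient.vdiv_eq

lemma ContDiff.continuous_vdiv {V : 𝔼 n → 𝔼 n} (hV : ContDiff ℝ 1 V) : Continuous (vdiv V) := by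
  have h := hV.continuous_fderiv one_ne_zero
  unfold vdiv
  fun_prop

lemma ContDiffAt.gradient {u : 𝔼 n → ℝ} {x : 𝔼 n} (hu : ContDiffAt ℝ 2 u x) :
    ContDiffAt ℝ 1 (gradient u) x :=
  (InnerProductSpace.toDual ℝ (𝔼 n)).symm.toContinuousLinearEquiv.contDiff.contDiffAt.comp x
    (hu.fderiv_right (m := 1) (by norm_num))

lemma ContDiff.gradient {u : 𝔼 n → ℝ} (hu : ContDiff ℝ 2 u) : ContDiff ℝ 1 (gradient u) :=
  contDiff_iff_contDiffAt.2 fun _ => hu.contDiffAt.gradient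

lemma ContDiff.continuous_lap {u : 𝔼 n → ℝ} (hu : ContDiff ℝ 2 u) : Continuous (lap u) :=
  hu.gradient.continuous_vdiv

lemma HasCompactSupport.gradient {u : 𝔼 n → ℝ} (hu : HasCompactSupport u) :
    HasCompactSupport (gradient u) :=
  (hu.fderiv (𝕜 := ℝ)).comp_left (g := (InnerProductSpace.toDual ℝ (𝔼 n)).symm) (map_zero _)

lemma HasCompactSupport.vdiv {V : 𝔼 n → 𝔼 n} (hV : HasCompactSupport V) :
    HasCompactSupport (vdiv V) :=
  (hV.fderiv (𝕜 := ℝ)).comp_left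
    (g := fun A : 𝔼 n →L[ℝ] 𝔼 n => ∑ i, A (EuclideanSpace.single i 1) i) (by simp)

lemma gradient_fderiv_symm {u : 𝔼 n → ℝ} {x : 𝔼 n} (hu : ContDiffAt ℝ 2 u x) (v w : 𝔼 n) :
    ⟪fderiv ℝ (gradient u) x v, w⟫ = ⟪fderiv ℝ (gradient u) x w, v⟫ := by
  have hd : DifferentiableAt ℝ (fderiv ℝ u) x :=
    (hu.fderiv_right (m := 1) (by norm_num)).differentiableAt one_ne_zero
  have h (w : 𝔼 n) (v : 𝔼 n) : ⟪fderiv ℝ (gradient u) x v, w⟫ = fderiv ℝ (fderiv ℝ u) x v w := by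
    have h1 := (hu.gradient.differentiableAt one_ne_zero).hasFDerivAt.inner ℝ
      (hasFDerivAt_const w x)
    have h2 := hd.hasFDerivAt.clm_apply (hasFDerivAt_const w x)
    simp only [inner_gradient_left] at h1
    simpa [fderivInnerCLM_apply] using DFunLike.congr_fun (h1.unique h2) v
  rw [h, h]
  exact hu.isSymmSndFDerivAt (by simp) v w

/-- The divergence theorem for compactly supported vector fields. -/
lemma integral_vdiv_eq_zero {V : 𝔼 n → 𝔼 n} (hV : ContDiff ℝ 1 V) (hc : HasCompactSupport V) :
    ∫ x, vdiv V x = 0 := by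
  have hcont := hV.continuous_fderiv one_ne_zero
  have hi : ∀ i : Fin n, Integrable fun x => fderiv ℝ V x (EuclideanSpace.single i 1) i :=
    fun i => Continuous.integrable_of_hasCompactSupport (by fun_prop)
      ((hc.fderiv (𝕜 := ℝ)).comp_left
        (g := fun A : 𝔼 n →L[ℝ] 𝔼 n => A (EuclideanSpace.single i 1) i) (by simp))
  unfold vdiv
  rw [integral_finsetSum _ fun i _ => hi i]
  refine Finset.sum_eq_zero fun i _ => ?_
  have := integral_bilinear_fderiv_right_eq_neg_left_of_integrable (μ := volume)
    (f := fun _ : 𝔼 n => (EuclideanSpace.proj i : 𝔼 n →L[ℝ] ℝ)) (g := V)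
    (v := EuclideanSpace.single i 1) (B := ContinuousLinearMap.id ℝ (𝔼 n →L[ℝ] ℝ))
    (by simp) (by simpa using hi i)
    (by
      have hVc := hV.continuous
      refine Continuous.integrable_of_hasCompactSupport (by fun_prop)
        (hc.comp_left (g := fun w : 𝔼 n => w i) (by simp)))
    (fun x _ => by fun_prop) (fun x _ => hV.differentiable one_ne_zero x)
  simpa using this

lemma exists_vdiv_le_sq {v : 𝔼 n → ℝ} (hv : ContDiff ℝ 2 v) (hc : HasCompactSupport v)
    {X : 𝔼 n → 𝔼 n} {H : 𝔼 n →L[ℝ] 𝔼 n} (hX : ∀ x, HasFDerivAt X H x) {T : ℝ}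
    (hT : ∀ x, vdiv X x = T) (a τ : ℝ) :
    ∃ F : 𝔼 n → 𝔼 n, ContDiff ℝ 1 F ∧ HasCompactSupport F ∧ ∀ x,
      vdiv F x + 4 * τ * (⟪H (gradient v x), gradient v x⟫ - a * ⟪gradient v x, gradient v x⟫)
        + (4 * τ ^ 3 * (⟪H (X x), X x⟫ + a * ⟪X x, X x⟫) - 8 * a ^ 2 * τ ^ 2) * v x ^ 2
      ≤ (lap v x - 2 * τ * ⟪X x, gradient v x⟫ + τ ^ 2 * ⟪X x, X x⟫ * v x - τ * T * v x) ^ 2 := by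
  have hXc : ContDiff ℝ 1 X := by
    rw [contDiff_one_iff_fderiv]
    refine ⟨fun x => (hX x).differentiableAt, ?_⟩
    have : fderiv ℝ X = fun _ => H := funext fun x => (hX x).fderiv
    rw [this]
    exact continuous_const
  have hG := hv.gradient
  have hv1 : ContDiff ℝ 1 v := hv.of_le (by norm_num)
  have hα : ContDiff ℝ 1 fun x =>
      -(4 * τ) * ⟪X x, gradient v x⟫ + 2 * τ * (2 * a - T) * v x := by
    have := hXc.inner ℝ hG
    fun_prop
  have hβ : ContDiff ℝ 1 fun x => 2 * τ * ⟪gradient v x, gradient v x⟫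
      - 2 * τ * ((τ ^ 2 * ⟪X x, X x⟫ - 2 * a * τ) * v x ^ 2) := by
    have := hXc.inner ℝ hXc
    have := hG.inner ℝ hG
    fun_prop
  refine ⟨fun x => (-(4 * τ) * ⟪X x, gradient v x⟫ + 2 * τ * (2 * a - T) * v x) • gradient v x +
      (2 * τ * ⟪gradient v x, gradient v x⟫
      - 2 * τ * ((τ ^ 2 * ⟪X x, X x⟫ - 2 * a * τ) * v x ^ 2)) • X x,
      (hα.smul hG).add (hβ.smul hXc), ?_, fun x => ?_⟩
  · refine hc.mono' fun x hx => ?_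
    by_contra hxs
    refine hx ?_
    have h1 : v x = 0 := image_eq_zero_of_notMem_tsupport hxs
    have h2 : gradient v x = 0 := by
      have h0 : v =ᶠ[𝓝 x] fun _ => 0 := notMem_tsupport_iff_eventuallyEq.1 hxs
      rw [h0.gradient_eq, gradient_fun_const]
    simp [h1, h2]
  · have hGx := (hG.differentiable one_ne_zero x).hasFDerivAt
    have hvx := (hv1.differentiable one_ne_zero x).hasFDerivAt
    have hα' : HasFDerivAt (fun x =>
        -(4 * τ) * ⟪X x, gradient v x⟫ + 2 * τ * (2 * a - T) * v x) _ x := (((hX x).inner ℝ hGx).const_mul (-(4 * τ))).add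
      (hvx.const_mul (2 * τ * (2 * a - T)))
    have hβ' : HasFDerivAt (fun x => 2 * τ * ⟪gradient v x, gradient v x⟫
        - 2 * τ * ((τ ^ 2 * ⟪X x, X x⟫ - 2 * a * τ) * v x ^ 2)) _ x := ((hGx.inner ℝ hGx).const_mul (2 * τ)).sub
      ((((((hX x).inner ℝ (hX x)).const_mul (τ ^ 2)).sub_const (2 * a * τ)).mul
        (hvx.pow 2)).const_mul (2 * τ))
    have hd1 := (hα.smul hG).differentiable one_ne_zero x
    have hd2 := (hβ.smul hXc).differentiable one_ne_zero x
    rw [vdiv_add (by exact hd1) (by exact hd2), hα'.vdiv_smul hGx.differentiableAt,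
      hβ'.vdiv_smul (hX x).differentiableAt, hT]
    have hs := gradient_fderiv_symm (x := x) hv.contDiffAt (X x) (gradient v x)
    have e1 : fderiv ℝ v x (gradient v x) = ⟪gradient v x, gradient v x⟫ :=
      (inner_gradient_left).symm
    have e2 : fderiv ℝ v x (X x) = ⟪X x, gradient v x⟫ := by
      rw [real_inner_comm]; exact (inner_gradient_left).symm
    have e3 := real_inner_comm (X x) (fderiv ℝ (gradient v) x (gradient v x))
    have e4 := real_inner_comm (gradient v x) (fderiv ℝ (gradient v) x (X x))
    have e5 := real_inner_comm (X x) (H (X x))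
    have hlap : vdiv (gradient v) x = lap v x := rfl
    simp only [_root_.add_apply, _root_.sub_apply,
      _root_.smul_apply, ContinuousLinearMap.comp_apply,
      ContinuousLinearMap.prod_apply, fderivInnerCLM_apply, smul_eq_mul, nsmul_eq_mul, e1, e2,
      hlap, Nat.add_one_sub_one, pow_one, Nat.cast_ofNat]
    rw [← e3, ← e4, ← e5, hs]
    set N := ⟪X x, gradient v x⟫
    set q := τ ^ 2 * ⟪X x, X x⟫ - 2 * a * τ
    nlinarith [sq_nonneg (lap v x + q * v x),
      sq_nonneg (-(2 * τ) * N + τ * (2 * a - T) * v x)]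


lemma gradient_exp_mul {φ f : 𝔼 n → ℝ} {X : 𝔼 n → 𝔼 n} (hφ : ∀ x, HasGradientAt φ (X x) x)
    (hf : Differentiable ℝ f) (τ : ℝ) :
    gradient (fun x => Real.exp (τ * φ x) * f x) =
      fun x => Real.exp (τ * φ x) • (gradient f x + (τ * f x) • X x) := by
  refine gradient_eq fun x => ?_
  have h := ((hφ x).hasFDerivAt.const_mul τ).exp.mul (hf x).hasFDerivAt
  rw [hasGradientAt_iff_hasFDerivAt]
  refine h.congr_fderiv ?_
  ext w
  have e : fderiv ℝ f x w = ⟪gradient f x, w⟫ := inner_gradient_left.symm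
  simp only [_root_.add_apply, _root_.smul_apply, e,
    InnerProductSpace.toDual_apply_apply, inner_add_left, real_inner_smul_left, smul_eq_mul]
  ring

lemma lap_exp_mul {φ f : 𝔼 n → ℝ} {X : 𝔼 n → 𝔼 n} (hφ : ∀ x, HasGradientAt φ (X x) x)
    (hf : ContDiff ℝ 2 f) (hX : Differentiable ℝ X) (τ : ℝ) (x : 𝔼 n) :
    lap (fun x => Real.exp (τ * φ x) * f x) x = Real.exp (τ * φ x) *
      (lap f x + 2 * τ * ⟪X x, gradient f x⟫ + τ * f x * vdiv X x
        + τ ^ 2 * ⟪X x, X x⟫ * f x) := by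
  have hfd := hf.differentiable two_ne_zero
  have hG := hf.gradient.differentiable one_ne_zero
  have hτf : HasFDerivAt (fun x => τ * f x) _ x := (hfd x).hasFDerivAt.const_mul τ
  have hE : HasFDerivAt (fun x => Real.exp (τ * φ x)) _ x :=
    ((hφ x).hasFDerivAt.const_mul τ).exp
  have hd2 : DifferentiableAt ℝ (fun x => (τ * f x) • X x) x :=
    hτf.differentiableAt.smul (hX x)
  have hd3 : DifferentiableAt ℝ (fun x => gradient f x + (τ * f x) • X x) x := (hG x).add hd2
  rw [lap, gradient_exp_mul hφ hfd, hE.vdiv_smul hd3, vdiv_add (hG x) hd2,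
    hτf.vdiv_smul (hX x)]
  have e : fderiv ℝ f x (X x) = ⟪X x, gradient f x⟫ := by
    rw [real_inner_comm]; exact inner_gradient_left.symm
  simp only [_root_.smul_apply, e, InnerProductSpace.toDual_apply_apply,
    inner_add_right, inner_smul_right, smul_eq_mul, lap]
  ring

/-- A Carleman estimate for the Laplacian with a quadratic weight `φ`, whose gradient is `X` and
whose Hessian is `H`. -/
lemma carleman_estimate {φ f : 𝔼 n → ℝ} {X : 𝔼 n → 𝔼 n} {H : 𝔼 n →L[ℝ] 𝔼 n} {T a μ τ : ℝ}
    (hφ : ∀ x, HasGradientAt φ (X x) x) (hX : ∀ x, HasFDerivAt X H x) (hT : ∀ x, vdiv X x = T)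
    (hf : ContDiff ℝ 2 f) (hc : HasCompactSupport f) (hμ : 0 < μ)
    (hH : ∀ w, (a + μ) * ⟪w, w⟫ ≤ ⟪H w, w⟫)
    (hXH : ∀ x, f x ≠ 0 → μ ≤ ⟪H (X x), X x⟫ + a * ⟪X x, X x⟫)
    (hXb : ∀ x, f x ≠ 0 → ⟪X x, X x⟫ ≤ 4) (hτ : 1 ≤ τ) (hτa : 4 * a ^ 2 ≤ τ * μ) :
    μ * τ / 8 * ∫ x, Real.exp (2 * τ * φ x) * (f x ^ 2 + ⟪gradient f x, gradient f x⟫)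
      ≤ ∫ x, Real.exp (2 * τ * φ x) * lap f x ^ 2 := by
  have hφc : Continuous φ := continuous_iff_continuousAt.2 fun x => (hφ x).continuousAt
  have hXd : Differentiable ℝ X := fun x => (hX x).differentiableAt
  have hφ2 : ContDiff ℝ 2 φ := by
    have h1 : fderiv ℝ φ = fun x => InnerProductSpace.toDual ℝ (𝔼 n) (X x) :=
      funext fun x => (hφ x).hasFDerivAt.fderiv
    have hX1 : ContDiff ℝ 1 X := by
      rw [contDiff_one_iff_fderiv]
      refine ⟨hXd, ?_⟩
      rw [show fderiv ℝ X = fun _ => H from funext fun x => (hX x).fderiv]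
      exact continuous_const
    rw [show (2 : WithTop ℕ∞) = 1 + 1 by norm_num, contDiff_succ_iff_fderiv]
    refine ⟨fun x => (hφ x).differentiableAt, by simp, ?_⟩
    rw [h1]
    exact (InnerProductSpace.toDual ℝ (𝔼 n)).toContinuousLinearEquiv.contDiff.comp hX1
  have hv : ContDiff ℝ 2 fun x => Real.exp (τ * φ x) * f x :=
    (contDiff_const.mul hφ2).exp.mul hf
  obtain ⟨F, hF, hFc, hle⟩ := exists_vdiv_le_sq hv hc.mul_left hX hT a τ
  have hpt (x : 𝔼 n) : vdiv F x + μ * τ / 8 *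
      (Real.exp (2 * τ * φ x) * (f x ^ 2 + ⟪gradient f x, gradient f x⟫)) ≤
      Real.exp (2 * τ * φ x) * lap f x ^ 2 := by
    have h := hle x
    rw [lap_exp_mul hφ hf hXd, gradient_exp_mul hφ (hf.differentiable two_ne_zero), hT] at h
    beta_reduce at h
    have hH' := hH (Real.exp (τ * φ x) • (gradient f x + (τ * f x) • X x))
    have hE2 : Real.exp (2 * τ * φ x) = Real.exp (τ * φ x) ^ 2 := by
      rw [sq, ← Real.exp_add]; ring_nf
    have hsq : 0 ≤ ⟪gradient f x + (2 * (τ * f x)) • X x, gradient f x + (2 * (τ * f x)) • X x⟫ :=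
      real_inner_self_nonneg
    have hzero : μ * f x ^ 2 ≤ (⟪H (X x), X x⟫ + a * ⟪X x, X x⟫) * f x ^ 2 := by
      by_cases hfx : f x = 0
      · simp [hfx]
      · exact mul_le_mul_of_nonneg_right (hXH x hfx) (sq_nonneg _)
    have hbd : ⟪X x, X x⟫ * f x ^ 2 ≤ 4 * f x ^ 2 := by
      by_cases hfx : f x = 0
      · simp [hfx]
      · exact mul_le_mul_of_nonneg_right (hXb x hfx) (sq_nonneg _)
    have hcomm := real_inner_comm (X x) (gradient f x)
    rw [hE2]
    set E := Real.exp (τ * φ x)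
    set G := gradient f x + (τ * f x) • X x with hGdef
    have hGG : ⟪G, G⟫ = ⟪gradient f x, gradient f x⟫ + 2 * τ * f x * ⟪X x, gradient f x⟫
        + τ ^ 2 * f x ^ 2 * ⟪X x, X x⟫ := by
      simp only [hGdef, inner_add_left, inner_add_right, real_inner_smul_left,
        real_inner_smul_right, hcomm]
      ring
    have hXG : ⟪X x, G⟫ = ⟪X x, gradient f x⟫ + τ * f x * ⟪X x, X x⟫ := by
      simp only [hGdef, inner_add_right, real_inner_smul_right]
    simp only [inner_add_left, inner_add_right, real_inner_smul_left,
        real_inner_smul_right, hcomm] at hsq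
    simp only [map_smul, real_inner_smul_left, real_inner_smul_right, hXG] at h hH'
    have hgrad : ⟪gradient f x, gradient f x⟫ ≤ 2 * ⟪G, G⟫ + 8 * τ ^ 2 * f x ^ 2 := by
      nlinarith [mul_le_mul_of_nonneg_left hbd (sq_nonneg τ)]
    have hGG0 : 0 ≤ ⟪G, G⟫ := real_inner_self_nonneg
    have hτ0 : 0 < τ := by linarith
    have hmain : μ * τ / 8 * (f x ^ 2 + ⟪gradient f x, gradient f x⟫) ≤
        4 * τ * μ * ⟪G, G⟫ + (4 * τ ^ 3 * (⟪H (X x), X x⟫ + a * ⟪X x, X x⟫)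
          - 8 * a ^ 2 * τ ^ 2) * f x ^ 2 := by
      have h1 := mul_le_mul_of_nonneg_left hgrad (by positivity : 0 ≤ μ * τ / 8)
      have h2 := mul_le_mul_of_nonneg_left hzero (by positivity : 0 ≤ 4 * τ ^ 3)
      have h3 := mul_le_mul_of_nonneg_right hτa (by positivity : 0 ≤ 2 * τ ^ 2 * f x ^ 2)
      have h4 : μ * τ * f x ^ 2 ≤ μ * τ ^ 3 * f x ^ 2 := by
        gcongr
        nlinarith [mul_pos hτ0 hτ0]
      have h5 : 0 ≤ μ * τ * ⟪G, G⟫ := by positivity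
      have h6 : 0 ≤ μ * τ * f x ^ 2 := by positivity
      linarith
    have h7 := mul_le_mul_of_nonneg_left hmain (sq_nonneg E)
    have h8 := mul_le_mul_of_nonneg_left hH' (by positivity : 0 ≤ 4 * τ)
    linarith
  have hG := hf.gradient.continuous
  have hL := hf.continuous_lap
  have hfc := hf.continuous
  have hi1 : Integrable fun x =>
      Real.exp (2 * τ * φ x) * (f x ^ 2 + ⟪gradient f x, gradient f x⟫) := by
    refine Continuous.integrable_of_hasCompactSupport (by fun_prop) (HasCompactSupport.mul_left ?_)
    refine HasCompactSupport.add (hc.comp_left (g := fun t => t ^ 2) (by simp)) ?_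
    exact hc.gradient.comp_left (g := fun w => ⟪w, w⟫) (by simp)
  have hi2 : Integrable fun x => Real.exp (2 * τ * φ x) * lap f x ^ 2 := by
    refine Continuous.integrable_of_hasCompactSupport (by fun_prop) (HasCompactSupport.mul_left ?_)
    exact hc.gradient.vdiv.comp_left (g := fun t => t ^ 2) (by simp)
  have hi3 : Integrable (vdiv F) :=
    hF.continuous_vdiv.integrable_of_hasCompactSupport hFc.vdiv
  have := integral_mono (hi3.add (hi1.const_mul (μ * τ / 8))) hi2 hpt
  rw [integral_add' hi3 (hi1.const_mul _), integral_vdiv_eq_zero hF hFc, zero_add,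
    integral_const_mul] at this
  exact this

lemma eq_zero_of_lap_sq_le {φ f : 𝔼 n → ℝ} {X : 𝔼 n → 𝔼 n} {H : 𝔼 n →L[ℝ] 𝔼 n}
    {T a μ M δ : ℝ}
    (hφ : ∀ x, HasGradientAt φ (X x) x) (hX : ∀ x, HasFDerivAt X H x) (hT : ∀ x, vdiv X x = T)
    (hf : ContDiff ℝ 2 f) (hc : HasCompactSupport f) (hμ : 0 < μ)
    (hH : ∀ w, (a + μ) * ⟪w, w⟫ ≤ ⟪H w, w⟫)
    (hXH : ∀ x, f x ≠ 0 → μ ≤ ⟪H (X x), X x⟫ + a * ⟪X x, X x⟫)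
    (hXb : ∀ x, f x ≠ 0 → ⟪X x, X x⟫ ≤ 4) (hM : 0 ≤ M)
    (hfM : ∀ x, -δ < φ x → lap f x ^ 2 ≤ M * (f x ^ 2 + ⟪gradient f x, gradient f x⟫))
    {x : 𝔼 n} (hx : -δ < φ x) : f x = 0 := by
  have hφc : Continuous φ := continuous_iff_continuousAt.2 fun x => (hφ x).continuousAt
  have hG := hf.gradient.continuous
  have hL := hf.continuous_lap
  have hfc := hf.continuous
  have hLc : HasCompactSupport fun x => lap f x ^ 2 :=
    hc.gradient.vdiv.comp_left (g := fun t => t ^ 2) (by simp)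
  obtain ⟨K, hK⟩ := hLc.exists_bound_of_continuous (by fun_prop)
  have hK0 : 0 ≤ K := (norm_nonneg _).trans (hK 0)
  set S := {x | -δ < φ x} with hS
  have hSo : IsOpen S := isOpen_lt continuous_const hφc
  set B := tsupport fun x => lap f x ^ 2
  have hBm : MeasurableSet B := (isClosed_tsupport _).measurableSet
  have hBi : Integrable (B.indicator fun _ => K) :=
    (integrable_indicator_iff hBm).2 (integrableOn_const hLc.measure_lt_top.ne)
  have hf2 : Integrable fun x => f x ^ 2 :=
    Continuous.integrable_of_hasCompactSupport (by fun_prop)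
      (hc.comp_left (g := fun t => t ^ 2) (by simp))
  set C := ∫ x, B.indicator (fun _ => K) x
  set J := ∫ x in S, f x ^ 2 with hJ
  have key (τ : ℝ) (hτ : 1 ≤ τ) (hτa : 4 * a ^ 2 ≤ τ * μ) (hτM : M ≤ μ * τ / 8) :
      (μ * τ / 8 - M) * J ≤ C := by
    have hcar := carleman_estimate hφ hX hT hf hc hμ hH hXH hXb hτ hτa
    set I := ∫ x, Real.exp (2 * τ * φ x) * (f x ^ 2 + ⟪gradient f x, gradient f x⟫)
    have hi1 : Integrable fun x =>
        Real.exp (2 * τ * φ x) * (f x ^ 2 + ⟪gradient f x, gradient f x⟫) := by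
      refine Continuous.integrable_of_hasCompactSupport (by fun_prop)
        (HasCompactSupport.mul_left ?_)
      refine HasCompactSupport.add (hc.comp_left (g := fun t => t ^ 2) (by simp)) ?_
      exact hc.gradient.comp_left (g := fun w => ⟪w, w⟫) (by simp)
    have hi2 : Integrable fun x => Real.exp (2 * τ * φ x) * lap f x ^ 2 :=
      Continuous.integrable_of_hasCompactSupport (by fun_prop) hLc.mul_left
    have hup : ∫ x, Real.exp (2 * τ * φ x) * lap f x ^ 2 ≤
        M * I + Real.exp (-(2 * τ * δ)) * C := by
      rw [← integral_const_mul, ← integral_const_mul, ← integral_add (hi1.const_mul M)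
        (hBi.const_mul _)]
      refine integral_mono hi2 ((hi1.const_mul M).add (hBi.const_mul _)) fun x => ?_
      have hnn : 0 ≤ f x ^ 2 + ⟪gradient f x, gradient f x⟫ :=
        add_nonneg (sq_nonneg _) real_inner_self_nonneg
      have hind : 0 ≤ B.indicator (fun _ => K) x := indicator_nonneg (fun _ _ => hK0) x
      have hE := Real.exp_pos (2 * τ * φ x)
      by_cases hxS : -δ < φ x
      · have := mul_le_mul_of_nonneg_left (hfM x hxS) hE.le
        have : 0 ≤ Real.exp (-(2 * τ * δ)) * B.indicator (fun _ => K) x := by positivity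
        simp only
        linarith
      · have h1 : Real.exp (2 * τ * φ x) ≤ Real.exp (-(2 * τ * δ)) := by
          rw [Real.exp_le_exp]
          nlinarith
        have h2 : lap f x ^ 2 ≤ B.indicator (fun _ => K) x := by
          by_cases hxB : x ∈ B
          · rw [indicator_of_mem hxB]
            exact (le_abs_self _).trans (hK x)
          · rw [indicator_of_notMem hxB]
            exact (image_eq_zero_of_notMem_tsupport hxB).le
        have h3 := mul_le_mul h1 h2 (sq_nonneg _) (Real.exp_pos _).le
        have : 0 ≤ M * (Real.exp (2 * τ * φ x) *
          (f x ^ 2 + ⟪gradient f x, gradient f x⟫)) := by positivity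
        simp only
        linarith
    have hlow : Real.exp (-(2 * τ * δ)) * J ≤ I := by
      rw [hJ, ← integral_const_mul]
      refine (setIntegral_mono_on (hf2.const_mul _).integrableOn hi1.integrableOn
        hSo.measurableSet fun x hxS => ?_).trans
        (setIntegral_le_integral hi1 (Eventually.of_forall fun x => ?_))
      · have h1 : Real.exp (-(2 * τ * δ)) ≤ Real.exp (2 * τ * φ x) := by
          rw [Real.exp_le_exp]
          have : -δ < φ x := hxS
          nlinarith
        have : 0 ≤ ⟪gradient f x, gradient f x⟫ := real_inner_self_nonneg
        exact mul_le_mul h1 (by linarith) (sq_nonneg _) (Real.exp_pos _).le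
      · exact mul_nonneg (Real.exp_pos _).le (add_nonneg (sq_nonneg _) real_inner_self_nonneg)
    have h1 : (μ * τ / 8 - M) * (Real.exp (-(2 * τ * δ)) * J) ≤ Real.exp (-(2 * τ * δ)) * C :=
      (mul_le_mul_of_nonneg_left hlow (by linarith)).trans (by linarith)
    refine le_of_mul_le_mul_left ?_ (Real.exp_pos (-(2 * τ * δ)))
    linarith
  have hJ0 : 0 ≤ J := integral_nonneg fun x => sq_nonneg _
  have hJz : J = 0 := by
    by_contra hne
    have hJpos : 0 < J := lt_of_le_of_ne hJ0 (Ne.symm hne)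
    have ht : Tendsto (fun τ : ℝ => (μ * τ / 8 - M) * J) atTop atTop := by
      refine Tendsto.atTop_mul_const hJpos (tendsto_atTop_add_const_right _ _ ?_)
      exact (tendsto_id.const_mul_atTop hμ).atTop_div_const (by norm_num)
    obtain ⟨τ, h1, h2, h3, h4⟩ := ((ht.eventually_gt_atTop C).and
      ((eventually_ge_atTop 1).and ((eventually_ge_atTop (4 * a ^ 2 / μ)).and
      (eventually_ge_atTop (8 * M / μ))))).exists
    rw [div_le_iff₀ hμ] at h3 h4
    exact absurd (key τ h2 h3 (by linarith)) (not_le.2 h1)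
  have hae := (setIntegral_eq_zero_iff_of_nonneg_ae
    (Eventually.of_forall fun x => sq_nonneg (f x)) hf2.integrableOn).1 hJz
  have := Measure.eqOn_open_of_ae_eq hae hSo (by fun_prop) (by fun_prop) hx
  simpa using this

lemma contDiff_bump_mul {w : 𝔼 n → ℝ} {y : 𝔼 n} {R : ℝ} (χ : ContDiffBump y)
    (hR : χ.rOut < R) (hw : ContDiffOn ℝ 2 w (ball y R)) : ContDiff ℝ 2 fun x => χ x * w x := by
  rw [contDiff_iff_contDiffAt]
  intro x
  by_cases hx : x ∈ ball y R
  · exact χ.contDiff.contDiffAt.mul (hw.contDiffAt (isOpen_ball.mem_nhds hx))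
  · have hxs : x ∉ tsupport χ := by
      rw [χ.tsupport_eq]
      exact fun h => hx (closedBall_subset_ball hR h)
    refine (contDiffAt_const (c := (0 : ℝ))).congr_of_eventuallyEq ?_
    filter_upwards [notMem_tsupport_iff_eventuallyEq.1 hxs] with x' hx'
    simp [hx']

lemma eventuallyEq_zero_of_exterior_ball {w : 𝔼 n → ℝ} {y z : 𝔼 n} {R M r : ℝ} (hR : 0 < R)
    (hr : 0 < r) (hw : ContDiffOn ℝ 2 w (ball y R)) (hM : 0 ≤ M)
    (hwM : ∀ x ∈ ball y R, lap w x ^ 2 ≤ M * (w x ^ 2 + ⟪gradient w x, gradient w x⟫))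
    (hyz : dist y z = r) (hz : ∀ x ∈ ball z r, w x = 0) : w =ᶠ[𝓝 y] 0 := by
  obtain ⟨e, he1, hze⟩ : ∃ e : 𝔼 n, ⟪e, e⟫ = (1 : ℝ) ∧ z = y + r • e := by
    refine ⟨r⁻¹ • (z - y), ?_, ?_⟩
    · rw [real_inner_self_eq_norm_sq, norm_smul, ← dist_eq_norm, dist_comm, hyz,
        Real.norm_of_nonneg (by positivity), inv_mul_cancel₀ hr.ne', one_pow]
    · rw [smul_inv_smul₀ hr.ne']
      abel
  have hen : ‖e‖ = 1 := by
    rw [real_inner_self_eq_norm_sq] at he1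
    nlinarith [norm_nonneg e]
  obtain ⟨μ, hμr⟩ : ∃ μ, μ * r = 2 := ⟨2 / r, by field_simp⟩
  have hμ : 0 < μ := pos_of_mul_pos_left (by rw [hμr]; norm_num) hr.le
  obtain ⟨ρ, hρ, hρR, hρμ⟩ : ∃ ρ, 0 < ρ ∧ ρ < R ∧ μ * ρ ≤ 1 / 500 := by
    refine ⟨min (R / 2) (1 / (500 * μ)), by positivity, (min_le_left _ _).trans_lt (by linarith), ?_⟩
    calc μ * min (R / 2) (1 / (500 * μ)) ≤ μ * (1 / (500 * μ)) := by gcongr; exact min_le_right _ _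
      _ = 1 / 500 := by field_simp
  let X : 𝔼 n → 𝔼 n := fun x => (1 + 5 * μ * ⟪e, x - y⟫) • e - μ • (x - y)
  let φ : 𝔼 n → ℝ := fun x => ⟪e, x - y⟫ + 5 * μ / 2 * ⟪e, x - y⟫ ^ 2 - μ / 2 * ⟪x - y, x - y⟫
  let H : 𝔼 n →L[ℝ] 𝔼 n :=
    (5 * μ) • (innerSL ℝ e).smulRight e - μ • ContinuousLinearMap.id ℝ (𝔼 n)
  have hsub (x : 𝔼 n) : HasFDerivAt (fun x : 𝔼 n => x - y) (ContinuousLinearMap.id ℝ (𝔼 n)) x :=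
    (hasFDerivAt_id x).sub_const y
  have hin (x : 𝔼 n) : HasFDerivAt (fun x : 𝔼 n => ⟪e, x - y⟫) (innerSL ℝ e) x :=
    (innerSL ℝ e).hasFDerivAt.comp x (hsub x)
  have hφ (x : 𝔼 n) : HasGradientAt φ (X x) x := by
    rw [hasGradientAt_iff_hasFDerivAt]
    refine (((hin x).add (((hin x).pow 2).const_mul (5 * μ / 2))).sub
      (((hsub x).inner ℝ (hsub x)).const_mul (μ / 2))).congr_fderiv ?_
    ext v
    have := real_inner_comm v (x - y)
    simp only [X, _root_.add_apply, _root_.sub_apply, _root_.smul_apply, smul_eq_mul,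
      nsmul_eq_mul, ContinuousLinearMap.comp_apply, ContinuousLinearMap.prod_apply,
      ContinuousLinearMap.id_apply, fderivInnerCLM_apply, innerSL_apply_apply,
      InnerProductSpace.toDual_apply_apply, inner_sub_left, real_inner_smul_left,
      Nat.add_one_sub_one, pow_one, Nat.cast_ofNat] at this ⊢
    rw [← this]
    simp only [inner_sub_right]
    ring
  have hX (x : 𝔼 n) : HasFDerivAt X H x := by
    refine (((((hin x).const_mul (5 * μ)).const_add 1).smul_const e).sub
      ((hsub x).const_smul μ)).congr_fderiv ?_
    ext1 v
    simp [H, smul_smul]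
  have hHX (v : 𝔼 n) : ⟪H v, v⟫ = 5 * μ * ⟪e, v⟫ ^ 2 - μ * ⟪v, v⟫ := by
    simp only [H, _root_.sub_apply, _root_.smul_apply, ContinuousLinearMap.smulRight_apply,
      ContinuousLinearMap.id_apply, innerSL_apply_apply, inner_sub_left, real_inner_smul_left]
    ring
  have hcs (x : 𝔼 n) : |⟪e, x - y⟫| ≤ ‖x - y‖ := by
    simpa [hen] using abs_real_inner_le_norm e (x - y)
  have hXX (x : 𝔼 n) : ⟪X x, X x⟫ = (1 + 5 * μ * ⟪e, x - y⟫) ^ 2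
      - 2 * μ * (1 + 5 * μ * ⟪e, x - y⟫) * ⟪e, x - y⟫ + μ ^ 2 * ‖x - y‖ ^ 2 := by
    have hc := real_inner_comm e (x - y)
    simp only [X]
    generalize x - y = v at hc ⊢
    simp only [inner_sub_left, inner_sub_right, real_inner_smul_left, real_inner_smul_right, he1]
    rw [hc, real_inner_self_eq_norm_sq]
    ring
  have heX (x : 𝔼 n) : ⟪e, X x⟫ = 1 + 4 * μ * ⟪e, x - y⟫ := by
    simp only [X]
    generalize x - y = v
    simp only [inner_sub_right, real_inner_smul_right, he1]
    ring
  have hXest (x : 𝔼 n) (hx : dist x y ≤ ρ) :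
      ⟪X x, X x⟫ ≤ 21 / 20 ∧ 9 / 10 ≤ ⟪e, X x⟫ ^ 2 := by
    rw [hXX, heX]
    rw [dist_eq_norm] at hx
    have hs0 : 0 ≤ μ * ‖x - y‖ := by positivity
    have hs1 : μ * ‖x - y‖ ≤ 1 / 500 := (mul_le_mul_of_nonneg_left hx hμ.le).trans hρμ
    obtain ⟨ht1, ht2⟩ := abs_le.1 (hcs x)
    have ht3 := mul_le_mul_of_nonneg_left ht1 hμ.le
    have ht4 := mul_le_mul_of_nonneg_left ht2 hμ.le
    rw [mul_neg] at ht3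
    rw [mul_assoc 5 μ, mul_assoc 4 μ, ← mul_pow]
    rw [show 2 * μ * (1 + 5 * (μ * ⟪e, x - y⟫)) * ⟪e, x - y⟫
      = 2 * (1 + 5 * (μ * ⟪e, x - y⟫)) * (μ * ⟪e, x - y⟫) by ring]
    generalize μ * ‖x - y‖ = s at *
    generalize μ * ⟪e, x - y⟫ = p at *
    have hp := mul_nonneg (show 0 ≤ 1 / 500 - p by linarith) (show 0 ≤ p + 1 / 500 by linarith)
    have hs := mul_nonneg hs0 (show 0 ≤ 1 / 500 - s by linarith)
    constructor <;> nlinarith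
  let χ : ContDiffBump y := ⟨ρ / 2, ρ, by positivity, by linarith⟩
  set f : 𝔼 n → ℝ := fun x => χ x * w x with hfdef
  have hf : ContDiff ℝ 2 f := contDiff_bump_mul χ hρR hw
  have hfc : HasCompactSupport f := χ.hasCompactSupport.mul_right
  have hfball (x : 𝔼 n) (hx : f x ≠ 0) : dist x y ≤ ρ ∧ r ≤ dist x z := by
    constructor
    · have : x ∈ Function.support χ := left_ne_zero_of_mul hx
      rw [χ.support_eq] at this
      exact (mem_ball.1 this).le
    · by_contra hlt
      exact right_ne_zero_of_mul hx (hz x (mem_ball.2 (not_le.1 hlt)))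
  have hts (x : 𝔼 n) (hx : x ∈ tsupport f) : dist x y ≤ ρ ∧ r ≤ dist x z := by
    have hcl : IsClosed {x : 𝔼 n | dist x y ≤ ρ ∧ r ≤ dist x z} :=
      (isClosed_le (continuous_id.dist continuous_const) continuous_const).inter
        (isClosed_le continuous_const (continuous_id.dist continuous_const))
    exact closure_minimal hfball hcl hx
  have hfw (x : 𝔼 n) (hx : x ∈ ball y (ρ / 2)) : f =ᶠ[𝓝 x] w := by
    filter_upwards [isOpen_ball.mem_nhds hx] with x' hx'
    have : χ x' = 1 := χ.one_of_mem_closedBall (ball_subset_closedBall hx')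
    simp [hfdef, this]
  have hφs (x : 𝔼 n) (hx : x ∈ tsupport f) : φ x ≤ -(μ * dist x y ^ 2 / 5) := by
    obtain ⟨h1, h2⟩ := hts x hx
    have h3 : r ^ 2 ≤ dist x z ^ 2 := by gcongr
    have h4 : dist x z ^ 2 = ‖x - y‖ ^ 2 - 2 * r * ⟪e, x - y⟫ + r ^ 2 := by
      rw [dist_eq_norm, hze, ← sub_sub, norm_sub_sq_real, real_inner_smul_right, norm_smul, hen,
        real_inner_comm, mul_one, Real.norm_of_nonneg hr.le]
      ring
    rw [dist_eq_norm] at h1 ⊢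
    have h5 : ⟪e, x - y⟫ ≤ μ * ‖x - y‖ ^ 2 / 4 := by
      have : 2 * r * ⟪e, x - y⟫ ≤ ‖x - y‖ ^ 2 := by linarith
      nlinarith [mul_le_mul_of_nonneg_left this hμ.le]
    simp only [φ]
    rw [real_inner_self_eq_norm_sq]
    have hs1 : μ * ‖x - y‖ ≤ 1 / 500 := (mul_le_mul_of_nonneg_left h1 hμ.le).trans hρμ
    obtain ⟨ht1, ht2⟩ := abs_le.1 (hcs x)
    have ht3 := mul_le_mul_of_nonneg_left ht1 hμ.le
    have ht4 := mul_le_mul_of_nonneg_left ht2 hμ.le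
    have hs2 : 0 ≤ μ * ‖x - y‖ ^ 2 := by positivity
    rcases le_total 0 ⟪e, x - y⟫ with ht | ht
    · nlinarith [mul_le_mul_of_nonneg_right (ht4.trans hs1) ht]
    · have : 0 ≤ (1 / 500 + μ * ⟪e, x - y⟫) * (-⟪e, x - y⟫) :=
        mul_nonneg (by linarith) (by linarith)
      nlinarith
  have hfM (x : 𝔼 n) (hx : -(μ * ρ ^ 2 / 25) < φ x) :
      lap f x ^ 2 ≤ M * (f x ^ 2 + ⟪gradient f x, gradient f x⟫) := by
    by_cases hxb : x ∈ ball y (ρ / 2)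
    · have h := hfw x hxb
      rw [h.lap_eq, h.gradient_eq, h.eq_of_nhds]
      exact hwM x (ball_subset_ball (by linarith) hxb)
    · have hxs : x ∉ tsupport f := by
        intro hxs
        have h1 := hφs x hxs
        have h2 : ρ / 2 ≤ dist x y := not_lt.1 hxb
        have h3 : (ρ / 2) ^ 2 ≤ dist x y ^ 2 := by gcongr
        have h4 := mul_le_mul_of_nonneg_left h3 hμ.le
        have : 0 < μ * ρ ^ 2 := by positivity
        linarith
      have h := notMem_tsupport_iff_eventuallyEq.1 hxs
      have h0 : lap f x = 0 := by
        have hg : gradient (0 : 𝔼 n → ℝ) = fun _ => 0 :=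
          funext fun x => gradient_fun_const x 0
        rw [h.lap_eq, lap, hg]
        simp [vdiv]
      rw [h0, zero_pow two_ne_zero]
      exact mul_nonneg hM (add_nonneg (sq_nonneg _) real_inner_self_nonneg)
  have hzero (x : 𝔼 n) (hx : -(μ * ρ ^ 2 / 25) < φ x) : f x = 0 := by
    refine eq_zero_of_lap_sq_le (a := -2 * μ) (μ := μ) hφ hX (fun x => (hX x).vdiv_eq) hf hfc hμ
      (fun v => ?_) (fun x hx => ?_) (fun x hx => ?_) hM hfM hx
    · rw [hHX]
      nlinarith [sq_nonneg ⟪e, v⟫]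
    · rw [hHX]
      obtain ⟨h1, h2⟩ := hXest x (hfball x hx).1
      nlinarith
    · linarith [(hXest x (hfball x hx).1).1]
  have hφy : -(μ * ρ ^ 2 / 25) < φ y := by
    have : φ y = 0 := by simp [φ]
    rw [this]
    have : 0 < μ * ρ ^ 2 := by positivity
    linarith
  have hev : ∀ᶠ x in 𝓝 y, -(μ * ρ ^ 2 / 25) < φ x :=
    (hφ y).continuousAt.eventually (lt_mem_nhds hφy)
  filter_upwards [hev, hfw y (mem_ball_self (by positivity))] with x h1 h2
  rw [← h2, hzero x h1, Pi.zero_apply]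

/-- Weak unique continuation for the differential inequality `|Δw|² ≤ M (w² + |∇w|²)`. -/
lemma eqOn_zero_of_lap_sq_le {w : 𝔼 n → ℝ} {Ω U : Set (𝔼 n)} (hΩ : IsOpen Ω)
    (hΩc : IsPreconnected Ω) (hw : ContDiffOn ℝ 2 w Ω)
    (hwM : ∀ y ∈ Ω, ∃ M, 0 ≤ M ∧ ∀ᶠ x in 𝓝 y,
      lap w x ^ 2 ≤ M * (w x ^ 2 + ⟪gradient w x, gradient w x⟫))
    (hU : IsOpen U) (hUne : U.Nonempty) (hUΩ : U ⊆ Ω) (hwU : EqOn w 0 U) : EqOn w 0 Ω := by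
  set Z := interior {x | w x = 0} with hZ
  have hZw : ∀ x ∈ Z, w x = 0 := fun x hx => interior_subset (s := {x | w x = 0}) hx
  suffices h : Ω ⊆ Z from fun x hx => hZw x (h hx)
  refine hΩc.subset_of_closure_inter_subset isOpen_interior ?_ ?_
  · obtain ⟨x, hx⟩ := hUne
    exact ⟨x, hUΩ hx, mem_interior.2 ⟨U, hwU, hU, hx⟩⟩
  · rintro p ⟨hpZ, hpΩ⟩
    obtain ⟨R, hR, hRΩ⟩ := Metric.isOpen_iff.1 hΩ p hpΩ
    obtain ⟨z, hzZ, hpz⟩ := Metric.mem_closure_iff.1 hpZ (R / 2) (by positivity)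
    by_contra hp
    have hcl : IsClosed Zᶜ := isOpen_interior.isClosed_compl
    obtain ⟨y, hyZ, hy⟩ := hcl.exists_infDist_eq_dist ⟨p, hp⟩ z
    have hle : dist z y ≤ dist z p := hy ▸ infDist_le_dist_of_mem hp
    have hyp : dist y p < R := by
      have := dist_triangle y z p
      rw [dist_comm y z] at this
      rw [dist_comm p z] at hpz
      linarith
    have hyΩ : y ∈ Ω := hRΩ hyp
    have hr : 0 < dist y z := dist_pos.2 fun h => hyZ (h ▸ hzZ)
    obtain ⟨M, hM, hev⟩ := hwM y hyΩ
    obtain ⟨ε, hε, hball⟩ := Metric.eventually_nhds_iff_ball.1 (hev.and (hΩ.mem_nhds hyΩ))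
    have hz : ∀ x ∈ ball z (dist y z), w x = 0 := by
      intro x hx
      rw [dist_comm, ← hy] at hx
      exact hZw x (ball_infDist_compl_subset hx)
    have := eventuallyEq_zero_of_exterior_ball hε hr (hw.mono fun x hx => (hball x hx).2) hM
      (fun x hx => (hball x hx).1) rfl hz
    exact hyZ (mem_interior_iff_mem_nhds.2 this)

lemma gradient_sub_const_mul {u v : 𝔼 n → ℝ} {x : 𝔼 n} (hu : DifferentiableAt ℝ u x)
    (hv : DifferentiableAt ℝ v x) (k : ℝ) :
    gradient (fun y => u y - k * v y) x = gradient u x + (-k) • gradient v x := by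
  refine HasGradientAt.gradient ?_
  rw [hasGradientAt_iff_hasFDerivAt]
  refine (hu.hasFDerivAt.sub (hv.hasFDerivAt.const_mul k)).congr_fderiv ?_
  ext w
  simp [sub_eq_add_neg]

lemma lap_sub_const_mul {u v : 𝔼 n → ℝ} {x : 𝔼 n} (hu : ContDiffAt ℝ 2 u x)
    (hv : ContDiffAt ℝ 2 v x) (k : ℝ) :
    lap (fun y => u y - k * v y) x = lap u x - k * lap v x := by
  have h : gradient (fun y => u y - k * v y) =ᶠ[𝓝 x]
      fun y => gradient u y + (-k) • gradient v y := by
    filter_upwards [hu.eventually (by simp), hv.eventually (by simp)] with y h1 h2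
    exact gradient_sub_const_mul (h1.differentiableAt two_ne_zero)
      (h2.differentiableAt two_ne_zero) k
  have hv1 := hv.gradient.differentiableAt one_ne_zero
  have hv2 : DifferentiableAt ℝ (fun y => (-k) • gradient v y) x := hv1.const_smul (-k)
  rw [lap, h.vdiv_eq, vdiv_add (hu.gradient.differentiableAt one_ne_zero) hv2,
    (hasFDerivAt_const (-k) x).vdiv_smul hv1]
  simp [lap, sub_eq_add_neg]

lemma exists_lap_sq_le {Ω : Set (𝔼 n)} (hΩ : IsOpen Ω) {D σ w : 𝔼 n → ℝ}
    (hD : ContDiffOn ℝ 1 D Ω) {c : ℝ} (hc : 0 < c) (hDc : ∀ x ∈ Ω, c ≤ D x)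
    (hσ : ContinuousOn σ Ω)
    (hpde : ∀ x ∈ Ω, D x * lap w x + ⟪gradient D x, gradient w x⟫ - σ x * w x = 0)
    {y : 𝔼 n} (hy : y ∈ Ω) :
    ∃ M, 0 ≤ M ∧ ∀ᶠ x in 𝓝 y,
      lap w x ^ 2 ≤ M * (w x ^ 2 + ⟪gradient w x, gradient w x⟫) := by
  have hΩy := hΩ.mem_nhds hy
  have hσy : ContinuousAt (fun x => |σ x|) y := (hσ.continuousAt hΩy).abs
  have hDy : ContinuousAt (fun x => ‖gradient D x‖) y := by
    have h := ((hD.contDiffAt hΩy).continuousAt_fderiv one_ne_zero).norm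
    simpa [gradient] using h
  set S := max (|σ y| + 1) (‖gradient D y‖ + 1)
  have hS : 0 ≤ S := le_max_of_le_left (by positivity)
  have e1 : ∀ᶠ x in 𝓝 y, |σ x| < S :=
    hσy.eventually_lt_const (lt_max_of_lt_left (lt_add_one _))
  have e2 : ∀ᶠ x in 𝓝 y, ‖gradient D x‖ < S :=
    hDy.eventually_lt_const (lt_max_of_lt_right (lt_add_one _))
  refine ⟨2 * S ^ 2 / c ^ 2, by positivity, ?_⟩
  filter_upwards [e1, e2, hΩy] with x h1 h2 hx
  have hDx := hDc x hx
  have hlap : D x * lap w x = σ x * w x - ⟪gradient D x, gradient w x⟫ := by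
    linarith [hpde x hx]
  have hsw : (σ x * w x) ^ 2 ≤ S ^ 2 * w x ^ 2 := by
    rw [mul_pow]
    exact mul_le_mul_of_nonneg_right (sq_le_sq' (abs_lt.1 h1).1.le (abs_lt.1 h1).2.le)
      (sq_nonneg _)
  have hDw : ⟪gradient D x, gradient w x⟫ ^ 2 ≤ S ^ 2 * ⟪gradient w x, gradient w x⟫ := by
    rw [real_inner_self_eq_norm_sq, ← mul_pow, ← sq_abs]
    gcongr
    exact (abs_real_inner_le_norm _ _).trans (by gcongr)
  have hcD : c ^ 2 * lap w x ^ 2 ≤ (D x * lap w x) ^ 2 := by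
    rw [mul_pow]
    gcongr
  rw [div_mul_eq_mul_div, le_div_iff₀ (by positivity)]
  rw [hlap] at hcD
  nlinarith [sq_nonneg (σ x * w x + ⟪gradient D x, gradient w x⟫)]

end Calculus

/-- unique continuation for ratios of solutions: if `u1, u2` solve
`DΔu + ∇D·∇u − σu = 0` on a connected open `Ω`, `u2 > 0`, and `u1/u2` is constant on a
nonempty open `U ⊆ Ω`, then `u1 = λ·u2` on all of `Ω` for some constant `λ`. -/
theorem stmt_19 {n : ℕ} (Ω : Set (EuclideanSpace ℝ (Fin n)))
    (hΩ : IsOpen Ω) (hΩconn : IsConnected Ω)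
    (D σ u1 u2 : EuclideanSpace ℝ (Fin n) → ℝ)
    (hD : ContDiffOn ℝ 1 D Ω)
    (c : ℝ) (hc : 0 < c) (hDc : ∀ x ∈ Ω, c ≤ D x)
    (hσ : ContinuousOn σ Ω)
    (hu1 : ContDiffOn ℝ 2 u1 Ω) (hu2 : ContDiffOn ℝ 2 u2 Ω)
    (hu2pos : ∀ x ∈ Ω, 0 < u2 x)
    (hpde1 : ∀ x ∈ Ω, D x * lap u1 x + ⟪gradient D x, gradient u1 x⟫ - σ x * u1 x = 0)
    (hpde2 : ∀ x ∈ Ω, D x * lap u2 x + ⟪gradient D x, gradient u2 x⟫ - σ x * u2 x = 0)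
    (U : Set (EuclideanSpace ℝ (Fin n))) (hU : IsOpen U) (hUne : U.Nonempty) (hUΩ : U ⊆ Ω)
    (k : ℝ) (hk : ∀ x ∈ U, u1 x / u2 x = k) :
    ∃ lam : ℝ, ∀ x ∈ Ω, u1 x = lam * u2 x := by
  have hw : ContDiffOn ℝ 2 (fun x => u1 x - k * u2 x) Ω := hu1.sub (contDiffOn_const.mul hu2)
  have hpde : ∀ x ∈ Ω, D x * lap (fun x => u1 x - k * u2 x) x
      + ⟪gradient D x, gradient (fun x => u1 x - k * u2 x) x⟫ - σ x * (u1 x - k * u2 x) = 0 := by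
    intro x hx
    have h1 := hu1.contDiffAt (hΩ.mem_nhds hx)
    have h2 := hu2.contDiffAt (hΩ.mem_nhds hx)
    rw [lap_sub_const_mul h1 h2, gradient_sub_const_mul (h1.differentiableAt two_ne_zero)
      (h2.differentiableAt two_ne_zero), inner_add_right, real_inner_smul_right]
    linear_combination hpde1 x hx - k * hpde2 x hx
  have hwU : EqOn (fun x => u1 x - k * u2 x) 0 U := fun x hx => by
    have h := hk x hx
    rw [div_eq_iff (hu2pos x (hUΩ hx)).ne'] at h
    simp [h]
  refine ⟨k, fun x hx => sub_eq_zero.1 ?_⟩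
  exact eqOn_zero_of_lap_sq_le hΩ hΩconn.isPreconnected hw
    (fun y hy => exists_lap_sq_le hΩ hD hc hDc hσ hpde hy) hU hUne hUΩ hwU hx
end
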